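/- Let R be a right artinian ring and 0 → A → B → C → 0 a short exact sequence of finitely generated right R-modules with pd C finite. Then ψ(C) ≤ ψ(A ⊕ B) + 1. -/

import Mathlib

open Module Function

universe u

variable (R : Type u) [Ring R]

/-- A finitely generated right `R`-module, encoded as a module over `Rᵐᵒᵖ`. -/
structure FGMod where
  carrier : Type u
  [isAddCommGroup : AddCommGroup carrier]
  [isModule : Module Rᵐᵒᵖ carrier]
  [isFinite : Module.Finite Rᵐᵒᵖ carrier]

attribute [instance] FGMod.isAddCommGroup FGMod.isModule FGMod.isFinite

instance : CoeSort (FGMod R) (Type u) := ⟨FGMod.carrier⟩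

variable {R}

/-- Isomorphism of f.g. right modules. -/
def FGMod.Iso (M N : FGMod R) : Prop := Nonempty (M ≃ₗ[Rᵐᵒᵖ] N)

/-- Direct sum. -/
def FGMod.prod (M N : FGMod R) : FGMod R := ⟨M × N⟩

/-- `M^k`, the direct sum of `k` copies of `M`. -/
def FGMod.pow (M : FGMod R) (k : ℕ) : FGMod R := ⟨Fin k → M⟩

/-- `N` is (isomorphic to) a direct summand of `M`. -/
def FGMod.IsSummand (N M : FGMod R) : Prop :=
  ∃ A B : Submodule Rᵐᵒᵖ M, IsCompl A B ∧ Nonempty (N ≃ₗ[Rᵐᵒᵖ] A)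

/-- `M` is indecomposable. -/
def FGMod.Indec (M : FGMod R) : Prop :=
  Nontrivial M ∧ ∀ A B : Submodule Rᵐᵒᵖ M, IsCompl A B → A = ⊥ ∨ B = ⊥

/-- `M` is projective. -/
def FGMod.Proj (M : FGMod R) : Prop := Module.Projective Rᵐᵒᵖ M

/-- `f : P → M` is a projective cover: `P` projective, `f` surjective with superfluous kernel. -/
def IsProjCover (M P : FGMod R) (f : P →ₗ[Rᵐᵒᵖ] M) : Prop :=
  P.Proj ∧ Surjective f ∧ ∀ N : Submodule Rᵐᵒᵖ P, N ⊔ LinearMap.ker f = ⊤ → N = ⊤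

/-- `N` is a (first) syzygy of `M`: the kernel of a projective cover of `M`. -/
def IsSyzygy (M N : FGMod R) : Prop :=
  ∃ (P : FGMod R) (f : P →ₗ[Rᵐᵒᵖ] M),
    IsProjCover M P f ∧ Nonempty (N ≃ₗ[Rᵐᵒᵖ] LinearMap.ker f)

/-- `N` is an `n`-th syzygy of `M`. -/
def IsSyzygyN : ℕ → FGMod R → FGMod R → Prop
  | 0, M, N => M.Iso N
  | n+1, M, N => ∃ L, IsSyzygy M L ∧ IsSyzygyN n L N

/-- `M` has projective dimension at most `n`. -/
def HasPdLE : ℕ → FGMod R → Prop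
  | 0, M => M.Proj
  | n+1, M => M.Proj ∨ ∃ N, IsSyzygy M N ∧ HasPdLE n N

/-- `M` has finite projective dimension. -/
def FinPd (M : FGMod R) : Prop := ∃ n, HasPdLE n M

/-- The projective dimension of `M` (junk value if infinite). -/
noncomputable def pdIT (M : FGMod R) : ℕ := sInf {n | HasPdLE n M}

variable (R)

/-- The Igusa–Todorov relations in the free abelian group on f.g. right modules:
`[A] - [B] - [C]` whenever `A ≅ B ⊕ C`, and `[P]` for `P` projective. -/
def ITRel : Set (FreeAbelianGroup (FGMod R)) :=
  {x | ∃ A B C : FGMod R, Nonempty (A ≃ₗ[Rᵐᵒᵖ] (B × C : Type u)) ∧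
        x = FreeAbelianGroup.of A - FreeAbelianGroup.of B - FreeAbelianGroup.of C} ∪
  {x | ∃ P : FGMod R, P.Proj ∧ x = FreeAbelianGroup.of P}

/-- The Igusa–Todorov group `K`. -/
def ITK := FreeAbelianGroup (FGMod R) ⧸ AddSubgroup.closure (ITRel R)

noncomputable instance : AddCommGroup (ITK R) :=
  QuotientAddGroup.Quotient.addCommGroup _

/-- The class `[M]` in `K`. -/
noncomputable def ITcls (M : FGMod R) : ITK R := QuotientAddGroup.mk (FreeAbelianGroup.of M)

/-- `⟨M⟩`: the subgroup of `K` generated by the indecomposable non-projective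
direct summands of `M`. -/
noncomputable def ITgen (M : FGMod R) : AddSubgroup (ITK R) :=
  AddSubgroup.closure
    {x | ∃ N : FGMod R, N.IsSummand M ∧ N.Indec ∧ ¬N.Proj ∧ x = ITcls R N}

/-- The rank of a subgroup of `K`. -/
noncomputable def rkIT (H : AddSubgroup (ITK R)) : ℕ :=
  Module.finrank ℤ (AddSubgroup.toIntSubmodule H)

/-- `OmK` is a syzygy endomorphism of `K`: a group endomorphism sending `[M]` to `[ΩM]`. -/
def IsSyzygyEnd (OmK : AddMonoid.End (ITK R)) : Prop :=
  ∀ M N : FGMod R, IsSyzygy M N → OmK (ITcls R M) = ITcls R N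

/-- The Igusa–Todorov function `φ`: the least `n` such that the rank of
`Ω^i⟨M⟩` equals that of `Ω^n⟨M⟩` for all `i ≥ n`. -/
noncomputable def phiIT (OmK : AddMonoid.End (ITK R)) (M : FGMod R) : ℕ :=
  sInf {n | ∀ i, n ≤ i →
    rkIT R ((ITgen R M).map ((OmK ^ i : AddMonoid.End (ITK R)) : ITK R →+ ITK R))
      = rkIT R ((ITgen R M).map ((OmK ^ n : AddMonoid.End (ITK R)) : ITK R →+ ITK R))}

/-- The second Igusa–Todorov function `ψ`. -/
noncomputable def psiIT (OmK : AddMonoid.End (ITK R)) (M : FGMod R) : ℕ :=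
  phiIT R OmK M + sSup {d | ∃ N X : FGMod R, IsSyzygyN (phiIT R OmK M) M N ∧
      X.IsSummand N ∧ FinPd X ∧ d = pdIT X}

/-- The socle of a module: the sum of its simple submodules. -/
def socleIT (M : FGMod R) : Submodule Rᵐᵒᵖ M :=
  sSup {S : Submodule Rᵐᵒᵖ M | IsSimpleModule Rᵐᵒᵖ S}

/-!
Put `m = φ(A ⊕ B)`. As `pd C` is finite, a high power of `Ω` sends `[A] - [B]`, an element of
`⟨A ⊕ B⟩`, to zero. Since the rank of `Ω^i⟨A ⊕ B⟩` is constant for `i ≥ m`, already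
`Ω^m[A] = Ω^m[B]`, which by Krull–Schmidt means that the `m`-th syzygies of `A` and `B` have the
same nonprojective part `W`. The horseshoe lemma thus yields a short exact sequence
`0 → W ⊕ P → W ⊕ Q → Z → 0` with `P`, `Q` projective and `pd C ≤ pd Z + m`. Fitting's lemma splits
`W = U ⊕ V` such that the corner `W → W` of the first map is nilpotent on `U` and bijective on `V`.
This corner induces isomorphisms on `Ext^j` for all `j > pd Z`, and being nilpotent on `U` it forces
`pd U ≤ pd Z`. Conversely it induces isomorphisms on `Ext^j` for all `j > pd U`, whence
`pd Z ≤ pd U + 1`. As `U` is a direct summand of `Ω^m(A ⊕ B)`, this gives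
`ψ(C) ≤ pd C ≤ m + pd U + 1 ≤ ψ(A ⊕ B) + 1`.
-/

namespace IgusaTodorov

section LocalRing

variable {E : Type*} [Ring E] [IsLocalRing E]

theorem isUnit_of_mul_eq_one_of_isLocalRing {a b : E} (h : a * b = 1) : IsUnit a := by
  rcases IsLocalRing.isUnit_or_isUnit_of_add_one (add_sub_cancel (b * a) 1) with hba | hba
  · obtain ⟨u, hu⟩ := hba
    have hleft : (↑u⁻¹ * b) * a = 1 := by rw [mul_assoc, ← hu, Units.inv_mul]
    exact isUnit_iff_exists_and_exists.2 ⟨⟨b, h⟩, _, hleft⟩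
  · have ha : a * (1 - b * a) = 0 := by rw [mul_sub, ← mul_assoc, h, mul_one, one_mul, sub_self]
    rw [hba.mul_left_eq_zero.1 ha, zero_mul] at h
    exact absurd h zero_ne_one

theorem exists_isUnit_add_mul {a b x : E} (h : a * x + b = 1) : ∃ y, IsUnit (a + b * y) := by
  rcases IsLocalRing.isUnit_or_isUnit_of_add_one h with hax | ⟨u, rfl⟩
  · obtain ⟨u, hu⟩ := hax
    refine ⟨0, ?_⟩
    rw [mul_zero, add_zero]
    exact isUnit_of_mul_eq_one_of_isLocalRing (b := x * ↑u⁻¹) (by rw [← mul_assoc, ← hu, u.mul_inv])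
  · exact ⟨↑u⁻¹ * (1 - a), by rw [Units.mul_inv_cancel_left, add_sub_cancel]; exact isUnit_one⟩

end LocalRing

section Module

variable {S : Type*} [Ring S] {W X M N : Type*} [AddCommGroup W] [Module S W]
  [AddCommGroup X] [Module S X] [AddCommGroup M] [Module S M] [AddCommGroup N] [Module S N]

theorem exists_isCompl_le_ker_pow_bijective_restrict [IsArtinian S W] [IsNoetherian S W]
    (a : End S W) :
    ∃ U V : Submodule S W, IsCompl U V ∧ (∃ n, U ≤ LinearMap.ker (a ^ n)) ∧
      ∃ hV : ∀ x ∈ V, a x ∈ V, Bijective (a.restrict hV) := by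
  obtain ⟨n, hn⟩ := Filter.eventually_atTop.1 a.eventually_isCompl_ker_pow_range_pow
  have hcompl := hn (n + 1) n.le_succ
  have hV : ∀ x ∈ LinearMap.range (a ^ (n + 1)), a x ∈ LinearMap.range (a ^ (n + 1)) := by
    rintro _ ⟨y, rfl⟩
    exact ⟨a y, by rw [← Module.End.mul_apply, ← Module.End.mul_apply, ← pow_succ, ← pow_succ']⟩
  refine ⟨_, _, hcompl, ⟨n + 1, le_rfl⟩, hV,
    IsArtinian.bijective_of_injective_endomorphism _ ?_⟩
  rw [← LinearMap.ker_eq_bot, LinearMap.ker_restrict, ← le_bot_iff]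
  rintro ⟨x, hx⟩ hax
  have hax : a x = 0 := hax
  have hker : x ∈ LinearMap.ker (a ^ (n + 1)) := by
    rw [LinearMap.mem_ker, pow_succ, Module.End.mul_apply, hax, map_zero]
  exact Subtype.ext (Submodule.disjoint_def.1 hcompl.disjoint x hker hx)

theorem exists_projective_le_surjective [IsArtinian S X] [IsNoetherian S X] [Projective S X]
    {f : X →ₗ[S] M} (hf : Surjective f) {N : Submodule S X} (hN : N ⊔ LinearMap.ker f = ⊤) :
    ∃ V ≤ N, Projective S V ∧ Surjective (f ∘ₗ V.subtype) := by
  have hfN : Surjective (f ∘ₗ N.subtype) := by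
    rw [← LinearMap.range_eq_top, LinearMap.range_comp, Submodule.range_subtype,
      LinearMap.map_eq_top_iff (LinearMap.range_eq_top.2 hf), hN]
  obtain ⟨h, hfh⟩ := projective_lifting_property (f ∘ₗ N.subtype) f hfN
  let k : End S X := N.subtype ∘ₗ h
  have hfk (n : ℕ) (x : X) : f ((k ^ n) x) = f x := by
    induction n with
    | zero => rfl
    | succ n ih => rw [pow_succ', Module.End.mul_apply, ← ih]; exact LinearMap.congr_fun hfh _
  obtain ⟨U, V, hUV, ⟨n, hn⟩, hV, hbij⟩ := exists_isCompl_le_ker_pow_bijective_restrict k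
  refine ⟨V, fun v hv => ?_, ?_, fun m => ?_⟩
  · obtain ⟨w, hw⟩ := hbij.2 ⟨v, hv⟩
    have hkw : k w = v := congrArg Subtype.val hw
    exact hkw ▸ (h w).2
  · exact .of_split V.subtype (V.projectionOnto U hUV.symm) (by ext; simp)
  · obtain ⟨x, rfl⟩ := hf m
    obtain ⟨u, hu, v, hv, rfl⟩ := Submodule.mem_sup.1 (hUV.sup_eq_top ▸ Submodule.mem_top (x := x))
    refine ⟨⟨v, hv⟩, ?_⟩
    have hfu : f u = 0 := by rw [← hfk n, LinearMap.mem_ker.1 (hn hu), map_zero]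
    simp [hfu]

theorem isLocalRing_end_of_forall_isCompl [IsArtinian S X] [IsNoetherian S X] [Nontrivial X]
    (hX : ∀ U V : Submodule S X, IsCompl U V → U = ⊥ ∨ V = ⊥) : IsLocalRing (End S X) := by
  refine .of_isUnit_or_isUnit_one_sub_self fun a => ?_
  obtain ⟨U, V, hUV, ⟨n, hn⟩, hV, hbij⟩ := exists_isCompl_le_ker_pow_bijective_restrict a
  rcases hX U V hUV with rfl | rfl
  · obtain rfl : V = ⊤ := by simpa using hUV.sup_eq_top
    let e := (Submodule.topEquiv (R := S) (M := X))
    exact .inl ((Module.End.isUnit_iff a).2 ((e.bijective.comp hbij).comp e.symm.bijective))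
  · obtain rfl : U = ⊤ := by simpa using hUV.sup_eq_top
    exact .inr (IsNilpotent.isUnit_one_sub ⟨n, LinearMap.ker_eq_top.1 (top_le_iff.1 hn)⟩)

theorem isCompl_range_ker_of_bijective_comp {i : X →ₗ[S] W} {p : W →ₗ[S] M}
    (h : Bijective (p ∘ₗ i)) : IsCompl (LinearMap.range i) (LinearMap.ker p) := by
  constructor
  · rw [Submodule.disjoint_def]
    rintro _ ⟨x, rfl⟩ hx
    rw [h.injective (a₁ := x) (a₂ := 0) (by simpa using hx), map_zero]
  · rw [codisjoint_iff, eq_top_iff]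
    intro w _
    obtain ⟨x, hx⟩ := h.surjective (p w)
    exact Submodule.mem_sup.2 ⟨i x, ⟨x, rfl⟩, w - i x,
      by rw [LinearMap.mem_ker, map_sub, ← hx, LinearMap.comp_apply, sub_self], by abel⟩

theorem nonempty_equiv_of_bijective_corner (e : (X × M) ≃ₗ[S] (X × N))
    (h : Bijective (LinearMap.fst S X N ∘ₗ e.toLinearMap ∘ₗ LinearMap.inl S X M)) :
    Nonempty (M ≃ₗ[S] N) := by
  have hcompl : IsCompl (LinearMap.range (LinearMap.inl S X M))
      ((LinearMap.range (LinearMap.inr S X N)).comap e.toLinearMap) := by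
    rw [LinearMap.range_inr, ← LinearMap.ker_comp]
    exact isCompl_range_ker_of_bijective_comp h
  exact ⟨.ofInjective (LinearMap.inr S X M) LinearMap.inr_injective ≪≫ₗ
    (Submodule.quotientEquivOfIsCompl _ _ LinearMap.isCompl_range_inl_inr).symm ≪≫ₗ
    Submodule.quotientEquivOfIsCompl _ _ hcompl ≪≫ₗ e.ofSubmodule' _ ≪≫ₗ
    (LinearEquiv.ofInjective _ LinearMap.inr_injective).symm⟩

theorem nonempty_equiv_of_prod_equiv_prod [IsLocalRing (End S X)]
    (e : (X × M) ≃ₗ[S] (X × N)) : Nonempty (M ≃ₗ[S] N) := by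
  let a : End S X := LinearMap.fst S X N ∘ₗ e.toLinearMap ∘ₗ LinearMap.inl S X M
  let b : M →ₗ[S] X := LinearMap.fst S X N ∘ₗ e.toLinearMap ∘ₗ LinearMap.inr S X M
  let a' : End S X := LinearMap.fst S X M ∘ₗ e.symm.toLinearMap ∘ₗ LinearMap.inl S X N
  let c : X →ₗ[S] M := LinearMap.snd S X M ∘ₗ e.symm.toLinearMap ∘ₗ LinearMap.inl S X N
  have fst_apply (x : X) (m : M) : (e (x, m)).1 = a x + b m := by
    simp [a, b, ← Prod.fst_add, ← map_add]
  have hone : a * a' + b ∘ₗ c = 1 := by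
    ext x
    simp [a', c, ← fst_apply]
  obtain ⟨y, hy⟩ := exists_isUnit_add_mul hone
  let shear : (X × M) ≃ₗ[S] (X × M) := (LinearEquiv.refl S X).skewProd (.refl S M) (c ∘ₗ y)
  refine nonempty_equiv_of_bijective_corner (shear ≪≫ₗ e) ?_
  convert (Module.End.isUnit_iff _).1 hy using 2
  ext x
  simp [shear, fst_apply]

variable (S X M) in
/-- `X` is a retract of `M`. For modules this is the same as `X` being isomorphic to a direct
summand of `M`, but it does not refer to submodules of `M`. -/
def IsRetract : Prop := ∃ (i : X →ₗ[S] M) (r : M →ₗ[S] X), r ∘ₗ i = LinearMap.id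

theorem IsRetract.of_isUnit_comp {i : X →ₗ[S] M} {r : M →ₗ[S] X}
    (h : IsUnit (r ∘ₗ i : End S X)) : IsRetract S X M := by
  obtain ⟨u, hu⟩ := h
  exact ⟨i, (↑u⁻¹ : End S X) ∘ₗ r, by rw [LinearMap.comp_assoc, ← hu]; exact u.inv_mul⟩

theorem IsRetract.nonempty_equiv [Nontrivial X]
    (hM : ∀ U V : Submodule S M, IsCompl U V → U = ⊥ ∨ V = ⊥) (h : IsRetract S X M) :
    Nonempty (X ≃ₗ[S] M) := by
  obtain ⟨i, r, h⟩ := h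
  have hleft : LeftInverse r i := LinearMap.congr_fun h
  have hcompl : IsCompl (LinearMap.range i) (LinearMap.ker r) :=
    isCompl_range_ker_of_bijective_comp (by rw [h]; exact bijective_id)
  rcases hM _ _ hcompl with hrange | hker
  · obtain ⟨x, hx⟩ := exists_ne (0 : X)
    rw [LinearMap.range_eq_bot.1 hrange, LinearMap.comp_zero] at h
    exact absurd (LinearMap.congr_fun h x).symm hx
  · exact ⟨(LinearEquiv.ofBijective r ⟨LinearMap.ker_eq_bot.1 hker, hleft.surjective⟩).symm⟩

theorem IsRetract.left_or_right_of_prod [IsLocalRing (End S X)] (h : IsRetract S X (M × N)) :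
    IsRetract S X M ∨ IsRetract S X N := by
  obtain ⟨i, r, h⟩ := h
  have hsum : ((r ∘ₗ LinearMap.inl S M N) ∘ₗ LinearMap.fst S M N ∘ₗ i : End S X) +
      (r ∘ₗ LinearMap.inr S M N) ∘ₗ LinearMap.snd S M N ∘ₗ i = 1 := by
    ext x
    simpa [← map_add] using LinearMap.congr_fun h x
  exact (IsLocalRing.isUnit_or_isUnit_of_add_one hsum).imp .of_isUnit_comp .of_isUnit_comp

theorem nonempty_equiv_prod_of_exact [Projective S N] {i : X →ₗ[S] M} {p : M →ₗ[S] N}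
    (hip : Exact i p) (hi : Injective i) (hp : Surjective p) : Nonempty (M ≃ₗ[S] X × N) := by
  obtain ⟨l, hl⟩ := Module.projective_lifting_property p LinearMap.id hp
  exact ⟨(hip.splitSurjectiveEquiv hi ⟨l, hl⟩).1⟩

variable {P Q A B C : Type*} [AddCommGroup P] [Module S P] [AddCommGroup Q] [Module S Q]
  [AddCommGroup A] [Module S A] [AddCommGroup B] [Module S B] [AddCommGroup C] [Module S C]

theorem nonempty_ker_coprod_equiv [Projective S Q] (p : P →ₗ[S] M) (q : Q →ₗ[S] M)
    (hp : Surjective p) :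
    Nonempty (LinearMap.ker (p.coprod q) ≃ₗ[S] LinearMap.ker p × Q) := by
  let i : LinearMap.ker p →ₗ[S] LinearMap.ker (p.coprod q) :=
    (LinearMap.inl S P Q).restrict fun x hx => by simpa using hx
  refine nonempty_equiv_prod_of_exact (i := i)
    (p := LinearMap.snd S P Q ∘ₗ (LinearMap.ker (p.coprod q)).subtype) ?_ ?_ ?_
  · rintro ⟨⟨x, y⟩, hxy⟩
    constructor
    · rintro (rfl : y = 0)
      exact ⟨⟨x, by simpa using hxy⟩, rfl⟩
    · rintro ⟨z, hz⟩
      rw [← hz]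
      rfl
  · exact fun x y hxy => Subtype.ext (congrArg (fun z => z.1.1) hxy)
  · intro y
    obtain ⟨x, hx⟩ := hp (-q y)
    exact ⟨⟨(x, y), by simp [hx]⟩, rfl⟩

theorem nonempty_ker_prod_equiv_ker_prod [Projective S P] [Projective S Q]
    {p : P →ₗ[S] M} {q : Q →ₗ[S] M} (hp : Surjective p) (hq : Surjective q) :
    Nonempty ((LinearMap.ker p × Q) ≃ₗ[S] LinearMap.ker q × P) := by
  obtain ⟨e⟩ := nonempty_ker_coprod_equiv p q hp
  obtain ⟨e'⟩ := nonempty_ker_coprod_equiv q p hq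
  have hcomm : (LinearMap.ker (p.coprod q)).map (LinearEquiv.prodComm S P Q : _ →ₗ[S] _) =
      LinearMap.ker (q.coprod p) := by
    ext ⟨y, x⟩
    simp [add_comm]
  exact ⟨e.symm ≪≫ₗ (LinearEquiv.prodComm S P Q).ofSubmodules _ _ hcomm ≪≫ₗ e'⟩

theorem exists_exact_ker_of_exact [Projective S Q] {f : A →ₗ[S] B} {g : B →ₗ[S] C}
    (hf : Injective f) (hg : Surjective g) (hfg : Exact f g) {p : P →ₗ[S] A} {q : Q →ₗ[S] C}
    (hp : Surjective p) (hq : Surjective q) :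
    ∃ (h : P × Q →ₗ[S] B) (i : LinearMap.ker p →ₗ[S] LinearMap.ker h)
      (r : LinearMap.ker h →ₗ[S] LinearMap.ker q),
      Surjective h ∧ Injective i ∧ Surjective r ∧ Exact i r := by
  obtain ⟨s, hs⟩ := Module.projective_lifting_property g q hg
  have hs : ∀ y, g (s y) = q y := LinearMap.congr_fun hs
  have hgf : ∀ a, g (f a) = 0 := hfg.apply_apply_eq_zero
  let h : P × Q →ₗ[S] B := (f ∘ₗ p).coprod s
  have hgh : ∀ z, g (h z) = q z.2 := fun z => by simp [h, hgf, hs]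
  have exists_fst (b : B) (y : Q) (hb : g b = q y) : ∃ x, h (x, y) = b := by
    obtain ⟨a, ha⟩ := (hfg (b - s y)).1 (by rw [map_sub, hs, hb, sub_self])
    obtain ⟨x, rfl⟩ := hp a
    exact ⟨x, by simp [h, ha]⟩
  refine ⟨h, (LinearMap.inl S P Q).restrict fun x (hx : p x = 0) => by simp [h, hx],
    (LinearMap.snd S P Q).restrict fun z (hz : h z = 0) => by
      rw [LinearMap.mem_ker, LinearMap.snd_apply, ← hgh, hz, map_zero], ?_, ?_, ?_, ?_⟩
  · intro b
    obtain ⟨y, hy⟩ := hq (g b)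
    exact (exists_fst b y hy.symm).imp' (·, y) fun _ => id
  · exact fun x y hxy => Subtype.ext (congrArg (fun z => z.1.1) hxy)
  · rintro ⟨y, hy⟩
    obtain ⟨x, hx⟩ := exists_fst 0 y (by rw [map_zero]; exact hy.symm)
    exact ⟨⟨(x, y), hx⟩, rfl⟩
  · rintro ⟨⟨x, y⟩, hxy⟩
    refine ⟨fun hy => ?_, fun ⟨z, hz⟩ => by rw [← hz]; rfl⟩
    obtain rfl : y = 0 := congrArg Subtype.val hy
    exact ⟨⟨x, hf (by simpa [h] using hxy)⟩, rfl⟩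

end Module

section Rank

variable {S M N : Type*} [CommRing S] [IsDomain S] [AddCommGroup M] [Module S M]
  [AddCommGroup N] [Module S N]

theorem antitone_finrank_map_pow (F : End S M) (H : Submodule S M) [Module.Finite S H] :
    Antitone fun i => finrank S (H.map (F ^ i)) := by
  refine antitone_nat_of_succ_le fun i => ?_
  rw [pow_succ', Module.End.mul_eq_comp, Submodule.map_comp]
  exact Submodule.finrank_map_le F _

theorem exists_forall_finrank_map_pow_eq (F : End S M) (H : Submodule S M) [Module.Finite S H] :
    ∃ n, ∀ i ≥ n, finrank S (H.map (F ^ i)) = finrank S (H.map (F ^ n)) := by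
  obtain ⟨n, hn⟩ := WellFoundedLT.antitone_chain_condition (antitone_finrank_map_pow F H)
  exact ⟨n, fun i hi => (hn i hi).symm⟩

variable [IsNoetherianRing S] [IsTorsionFree S M] {H : Submodule S M} [Module.Finite S H]

theorem eq_zero_of_finrank_map_eq {F : M →ₗ[S] N} (h : finrank S (H.map F) = finrank S H)
    {x : M} (hx : x ∈ H) (hFx : F x = 0) : x = 0 := by
  have hrank := Submodule.finrank_quotient_add_finrank (LinearMap.ker (F.domRestrict H))
  rw [(F.domRestrict H).quotKerEquivRange.finrank_eq, LinearMap.range_domRestrict, h,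
    Nat.add_eq_left] at hrank
  exact congrArg Subtype.val
    (LinearMap.ker_eq_bot'.1 (Submodule.finrank_eq_zero.1 hrank) ⟨x, hx⟩ hFx)

theorem pow_apply_eq_zero_of_finrank_map_pow_eq {F : End S M} {m n : ℕ}
    (h : finrank S (H.map (F ^ (m + n))) = finrank S (H.map (F ^ m))) {x : M} (hx : x ∈ H)
    (hFx : (F ^ (m + n)) x = 0) : (F ^ m) x = 0 := by
  rw [add_comm, pow_add, Module.End.mul_eq_comp] at h hFx
  rw [Submodule.map_comp] at h
  exact eq_zero_of_finrank_map_eq h (Submodule.mem_map_of_mem hx) hFx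

end Rank

section Ext

open CategoryTheory Abelian

universe w v v'

variable {𝒜 : Type v} [Category.{v'} 𝒜] [Abelian 𝒜] [HasExt.{w} 𝒜]

variable (𝒜) in
/-- The morphisms inducing isomorphisms on `Ext^j(-, T)` for every object `T`. -/
def extIso (j : ℕ) : MorphismProperty 𝒜 :=
  ((MorphismProperty.isomorphisms _).inverseImage (extFunctor.{w} (C := 𝒜) j)).unop

instance (j : ℕ) : (extIso.{w} 𝒜 j).HasTwoOutOfThreeProperty := by
  unfold extIso; infer_instance

instance (j : ℕ) : (extIso.{w} 𝒜 j).ContainsIdentities := by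
  unfold extIso; infer_instance

instance (j : ℕ) : (extIso.{w} 𝒜 j).RespectsIso := by
  unfold extIso; infer_instance

variable {X Y : 𝒜} {j : ℕ}

theorem extIso_iff {f : X ⟶ Y} : extIso.{w} 𝒜 j f ↔
    ∀ T : 𝒜, Bijective fun α : Ext.{w} Y T j => (Ext.mk₀ f).comp α (zero_add j) := by
  rw [extIso, MorphismProperty.unop, MorphismProperty.inverseImage_iff,
    MorphismProperty.isomorphisms.iff, NatTrans.isIso_iff_isIso_app]
  refine forall_congr' fun T => ?_
  rw [ConcreteCategory.isIso_iff_bijective]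
  rfl

theorem extIso_of_shortExact {E : ShortComplex 𝒜} (hE : E.ShortExact) {d : ℕ}
    [HasProjectiveDimensionLT E.X₃ d] (hj : d ≤ j) : extIso.{w} 𝒜 j E.f := by
  refine extIso_iff.2 fun T => ⟨?_, fun α => ?_⟩
  · refine (injective_iff_map_eq_zero
      (((extFunctor.{w} j).map E.f.op).app T).hom).2 fun α hα => ?_
    obtain ⟨γ, rfl⟩ := Ext.contravariant_sequence_exact₂ hE T α hα
    rw [γ.eq_zero_of_hasProjectiveDimensionLT d hj, Ext.comp_zero]
    rfl
  · exact Ext.contravariant_sequence_exact₁ hE T α (add_comm 1 j)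
      (Ext.eq_zero_of_hasProjectiveDimensionLT _ d (hj.trans j.le_succ))

theorem hasProjectiveDimensionLT_of_extIso {E : ShortComplex 𝒜} (hE : E.ShortExact) {e : ℕ}
    (h : ∀ j, e ≤ j → extIso.{w} 𝒜 j E.f) : HasProjectiveDimensionLT E.X₃ (e + 1) := by
  refine .mk.{w} fun i hi T ζ => ?_
  obtain ⟨j, rfl⟩ := Nat.exists_eq_add_of_le' (Nat.one_le_of_lt hi)
  have hg : (Ext.mk₀ E.g).comp ζ (zero_add _) = 0 := by
    refine (extIso_iff.1 (h (j + 1) (by lia)) T).injective ?_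
    simp [← Ext.comp_assoc]
  obtain ⟨α, rfl⟩ := Ext.contravariant_sequence_exact₃ hE T ζ hg (add_comm 1 j)
  obtain ⟨β, rfl⟩ := (extIso_iff.1 (h j (by lia)) T).surjective α
  exact hE.extClass_comp_assoc β

theorem hasProjectiveDimensionLT_of_comp_eq_zero {Z : 𝒜} {i : X ⟶ Y} [IsSplitMono i] {b : Y ⟶ Z}
    (hib : i ≫ b = 0) {d : ℕ} (hb : ∀ j, d ≤ j → extIso.{w} 𝒜 j b) :
    HasProjectiveDimensionLT X d := by
  refine .mk.{w} fun j hj T γ => ?_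
  obtain ⟨β, hβ⟩ := (extIso_iff.1 (hb j hj) T).surjective
    ((Ext.mk₀ (retraction i)).comp γ (zero_add j))
  calc γ = (Ext.mk₀ i).comp ((Ext.mk₀ (retraction i)).comp γ (zero_add j)) (zero_add j) := by
        simp
    _ = 0 := by rw [← hβ]; simp [hib]

end Ext

section FittingExt

open CategoryTheory

variable {S : Type u} [Ring S] {W P Q X Y Z : Type u} [AddCommGroup W] [Module S W]
  [AddCommGroup P] [Module S P] [AddCommGroup Q] [Module S Q] [AddCommGroup X] [Module S X]
  [AddCommGroup Y] [Module S Y] [AddCommGroup Z] [Module S Z] {j : ℕ}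

theorem shortExact_moduleCat_of_exact {f : X →ₗ[S] Y} {g : Y →ₗ[S] Z} (hf : Injective f)
    (hg : Surjective g) (hfg : Exact f g) :
    (ShortComplex.mk (ModuleCat.ofHom f) (ModuleCat.ofHom g)
      (by rw [← ModuleCat.ofHom_comp, hfg.linearMap_comp_eq_zero]; rfl)).ShortExact where
  exact := (ShortComplex.moduleCat_exact_iff_range_eq_ker _).2
    (LinearMap.exact_iff.1 hfg).symm
  mono_f := (ModuleCat.mono_iff_injective _).2 hf
  epi_g := (ModuleCat.epi_iff_surjective _).2 hg

theorem hasProjectiveDimensionLT_one_iff :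
    HasProjectiveDimensionLT (ModuleCat.of S X) 1 ↔ Projective S X :=
  projective_iff_hasProjectiveDimensionLT_one.symm.trans (IsProjective.iff_projective X).symm

theorem extIso_inl [Projective S P] (hj : 1 ≤ j) :
    extIso.{u} (ModuleCat.{u} S) j (ModuleCat.ofHom (LinearMap.inl S W P)) :=
  have : HasProjectiveDimensionLT (ModuleCat.of S P) 1 := hasProjectiveDimensionLT_one_iff.2 ‹_›
  extIso_of_shortExact (shortExact_moduleCat_of_exact LinearMap.inl_injective
    LinearMap.snd_surjective .inl_snd) hj

theorem extIso_fst [Projective S P] (hj : 1 ≤ j) :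
    extIso.{u} (ModuleCat.{u} S) j (ModuleCat.ofHom (LinearMap.fst S W P)) := by
  refine (extIso.{u} _ j).of_precomp _ _ (extIso_inl (P := P) hj) ?_
  rw [← ModuleCat.ofHom_comp, LinearMap.fst_comp_inl]
  exact (extIso.{u} _ j).id_mem _

theorem extIso_fst_comp_comp_inl_iff [Projective S P] [Projective S Q]
    (f : W × P →ₗ[S] X × Q) (hj : 1 ≤ j) :
    extIso.{u} (ModuleCat.{u} S) j
      (ModuleCat.ofHom (LinearMap.fst S X Q ∘ₗ f ∘ₗ LinearMap.inl S W P)) ↔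
    extIso.{u} (ModuleCat.{u} S) j (ModuleCat.ofHom f) := by
  rw [ModuleCat.ofHom_comp, ModuleCat.ofHom_comp,
    (extIso.{u} _ j).postcomp_iff _ _ (extIso_fst hj),
    (extIso.{u} _ j).precomp_iff _ _ (extIso_inl hj)]

theorem extIso_pow {a : End S W} (ha : extIso.{u} (ModuleCat.{u} S) j (ModuleCat.ofHom a))
    (n : ℕ) : extIso.{u} (ModuleCat.{u} S) j (ModuleCat.ofHom (a ^ n)) := by
  induction n with
  | zero => exact (extIso.{u} _ j).id_mem _
  | succ n ih => exact (extIso.{u} _ j).comp_mem _ _ ha ih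

theorem hasProjectiveDimensionLT_of_isCompl {U V : Submodule S W} (hUV : IsCompl U V)
    {a : End S W} {n : ℕ} (hn : U ≤ LinearMap.ker (a ^ n)) {d : ℕ}
    (ha : ∀ j, d ≤ j → extIso.{u} (ModuleCat.{u} S) j (ModuleCat.ofHom a)) :
    HasProjectiveDimensionLT (ModuleCat.of S U) d := by
  have : IsSplitMono (ModuleCat.ofHom U.subtype) := ⟨⟨ModuleCat.ofHom (U.projectionOnto V hUV), by
    ext x
    simp⟩⟩
  refine hasProjectiveDimensionLT_of_comp_eq_zero (i := ModuleCat.ofHom U.subtype)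
    (b := ModuleCat.ofHom (a ^ n)) ?_ fun j hj => extIso_pow (ha j hj) n
  ext x
  exact hn x.2

theorem extIso_of_isCompl {U V : Submodule S W} (hUV : IsCompl U V) {a : End S W}
    {hV : ∀ x ∈ V, a x ∈ V} (hbij : Bijective (a.restrict hV)) {e : ℕ}
    [HasProjectiveDimensionLT (ModuleCat.of S U) e] (hj : e ≤ j) :
    extIso.{u} (ModuleCat.{u} S) j (ModuleCat.ofHom a) := by
  have : HasProjectiveDimensionLT (ModuleCat.of S (W ⧸ V)) e := hasProjectiveDimensionLT_of_iso
    (V.quotientEquivOfIsCompl U hUV.symm).symm.toModuleIso e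
  have hsub : extIso.{u} (ModuleCat.{u} S) j (ModuleCat.ofHom V.subtype) :=
    extIso_of_shortExact (shortExact_moduleCat_of_exact V.subtype_injective V.mkQ_surjective
      (LinearMap.exact_subtype_mkQ V)) hj
  refine (extIso.{u} _ j).of_precomp _ _ hsub ?_
  have hcomm : ModuleCat.ofHom V.subtype ≫ ModuleCat.ofHom a =
    (LinearEquiv.ofBijective _ hbij).toModuleIso.hom ≫ ModuleCat.ofHom V.subtype := rfl
  rw [hcomm]
  exact (extIso.{u} _ j).cancel_left_of_respectsIso _ _ |>.2 hsub

theorem exists_isCompl_hasProjectiveDimensionLT [IsArtinian S W] [IsNoetherian S W]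
    [Projective S P] [Projective S Q] {f : W × P →ₗ[S] W × Q} {g : W × Q →ₗ[S] Z}
    (hf : Injective f) (hg : Surjective g) (hfg : Exact f g) {d : ℕ} (hd : 1 ≤ d)
    [HasProjectiveDimensionLT (ModuleCat.of S Z) d] :
    ∃ U V : Submodule S W, IsCompl U V ∧ HasProjectiveDimensionLT (ModuleCat.of S U) d ∧
      ∀ e, 1 ≤ e → HasProjectiveDimensionLT (ModuleCat.of S U) e →
        HasProjectiveDimensionLT (ModuleCat.of S Z) (e + 1) := by
  have hE := shortExact_moduleCat_of_exact hf hg hfg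
  let a : End S W := LinearMap.fst S W Q ∘ₗ f ∘ₗ LinearMap.inl S W P
  obtain ⟨U, V, hUV, ⟨n, hn⟩, hV, hbij⟩ := exists_isCompl_le_ker_pow_bijective_restrict a
  refine ⟨U, V, hUV, hasProjectiveDimensionLT_of_isCompl hUV hn fun j hj => ?_, fun e he hU => ?_⟩
  · exact (extIso_fst_comp_comp_inl_iff f (hd.trans hj)).2 (extIso_of_shortExact hE hj)
  · refine hasProjectiveDimensionLT_of_extIso hE fun j hj => ?_
    exact (extIso_fst_comp_comp_inl_iff f (he.trans hj)).1 (extIso_of_isCompl hUV hbij hj)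

end FittingExt

end IgusaTodorov

namespace FGMod

open IgusaTodorov

section DirectSum

variable {R} {L M N P X Y : FGMod R}

theorem Iso.refl (M : FGMod R) : M.Iso M := ⟨.refl _ _⟩

theorem Iso.symm : M.Iso N → N.Iso M := fun ⟨e⟩ => ⟨e.symm⟩

theorem Iso.trans : L.Iso M → M.Iso N → L.Iso N := fun ⟨e⟩ ⟨e'⟩ => ⟨e ≪≫ₗ e'⟩

theorem Iso.isRetract (h : M.Iso N) : IsRetract Rᵐᵒᵖ M N :=
  h.elim fun e => ⟨e.toLinearMap, e.symm.toLinearMap, by ext; simp⟩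

variable (R) in
/-- The zero module. -/
protected def zero : FGMod R := ⟨PUnit.{u + 1}⟩

theorem Proj.of_isRetract (hM : M.Proj) : IsRetract Rᵐᵒᵖ N M → N.Proj :=
  fun ⟨i, r, h⟩ => have : Projective Rᵐᵒᵖ M := hM; .of_split i r h

theorem Proj.prod (hM : M.Proj) (hN : N.Proj) : (M.prod N).Proj :=
  have : Projective Rᵐᵒᵖ M := hM
  have : Projective Rᵐᵒᵖ N := hN
  inferInstanceAs (Projective Rᵐᵒᵖ (M × N))

theorem Proj.zero : (FGMod.zero R).Proj :=
  inferInstanceAs (Projective Rᵐᵒᵖ PUnit.{u + 1})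

variable (R) in
/-- Isomorphism of finitely generated right modules, as a setoid. -/
def isoSetoid : Setoid (FGMod R) := ⟨FGMod.Iso, .refl, .symm, .trans⟩

variable (R) in
/-- The isomorphism classes of finitely generated right `R`-modules, a commutative monoid under
direct sum. -/
def IsoClass : Type (u + 1) := Quotient (isoSetoid R)

/-- The isomorphism class of a module. -/
def isoClass (M : FGMod R) : IsoClass R := Quotient.mk (isoSetoid R) M

theorem isoClass_eq_iff : M.isoClass = N.isoClass ↔ M.Iso N :=
  Quotient.eq (r := isoSetoid R)

theorem IsoClass.ind {p : IsoClass R → Prop} (h : ∀ M : FGMod R, p M.isoClass) (x : IsoClass R) :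
    p x :=
  Quotient.ind h x

theorem isoClass_surjective : Surjective (isoClass : FGMod R → IsoClass R) := Quotient.mk_surjective

namespace IsoClass

instance : Zero (IsoClass R) := ⟨(FGMod.zero R).isoClass⟩

instance : Add (IsoClass R) :=
  ⟨Quotient.map₂ FGMod.prod fun _ _ ⟨e⟩ _ _ ⟨e'⟩ => ⟨e.prodCongr e'⟩⟩

end IsoClass

theorem isoClass_prod (M N : FGMod R) : (M.prod N).isoClass = M.isoClass + N.isoClass := rfl

theorem isoClass_zero : (FGMod.zero R).isoClass = 0 := rfl

instance : AddCommMonoid (IsoClass R) where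
  add_assoc := IsoClass.ind fun L => IsoClass.ind fun M => IsoClass.ind fun N =>
    isoClass_eq_iff.2 ⟨.prodAssoc Rᵐᵒᵖ L M N⟩
  zero_add := IsoClass.ind fun M =>
    isoClass_eq_iff.2 ⟨.uniqueProd (R := Rᵐᵒᵖ) (M := M) (M₂ := PUnit.{u + 1})⟩
  add_zero := IsoClass.ind fun M =>
    isoClass_eq_iff.2 ⟨.prodUnique (R := Rᵐᵒᵖ) (M := M) (M₂ := PUnit.{u + 1})⟩
  add_comm := IsoClass.ind fun M => IsoClass.ind fun N => isoClass_eq_iff.2 ⟨.prodComm Rᵐᵒᵖ M N⟩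
  nsmul := nsmulRec

theorem isSummand_iff_isRetract : X.IsSummand M ↔ IsRetract Rᵐᵒᵖ X M := by
  constructor
  · rintro ⟨U, V, hUV, ⟨e⟩⟩
    exact ⟨U.subtype ∘ₗ e.toLinearMap, e.symm.toLinearMap ∘ₗ U.projectionOnto V hUV, by ext; simp⟩
  · rintro ⟨i, r, h⟩
    exact ⟨LinearMap.range i, LinearMap.ker r,
      isCompl_range_ker_of_bijective_comp (by rw [h]; exact bijective_id),
      ⟨.ofInjective i (LeftInverse.injective (LinearMap.congr_fun h))⟩⟩

theorem isSummand_iff_exists_isoClass_eq_add :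
    X.IsSummand M ↔ ∃ c, M.isoClass = X.isoClass + c := by
  constructor
  · rintro ⟨U, V, hUV, ⟨e⟩⟩
    have : Module.Finite Rᵐᵒᵖ V := .equiv (U.quotientEquivOfIsCompl V hUV)
    exact ⟨isoClass ⟨V⟩, isoClass_eq_iff.2
      ⟨(U.prodEquivOfIsCompl V hUV).symm ≪≫ₗ e.symm.prodCongr (.refl _ _)⟩⟩
  · rintro ⟨c, hc⟩
    obtain ⟨N, rfl⟩ := isoClass_surjective c
    obtain ⟨e : M ≃ₗ[Rᵐᵒᵖ] X × N⟩ := isoClass_eq_iff.1 hc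
    exact isSummand_iff_isRetract.2 ⟨e.symm.toLinearMap ∘ₗ LinearMap.inl _ _ _,
      LinearMap.fst _ _ _ ∘ₗ e.toLinearMap, by ext; simp⟩

theorem isoClass_eq_zero_iff : M.isoClass = 0 ↔ Subsingleton M := by
  constructor
  · intro h
    obtain ⟨e : M ≃ₗ[Rᵐᵒᵖ] PUnit.{u + 1}⟩ := isoClass_eq_iff.1 h
    exact e.injective.subsingleton
  · intro _
    exact isoClass_eq_iff.2 ⟨0, 0, fun _ => Subsingleton.elim _ _, fun _ => rfl⟩

variable (R) in
/-- The isomorphism classes of indecomposable modules. -/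
abbrev IndecClass : Type (u + 1) := {x : IsoClass R // ∃ M : FGMod R, M.Indec ∧ M.isoClass = x}

variable (R) in
/-- The direct sum of a multiset of indecomposables. -/
def sumIndec : Multiset (IndecClass R) →+ IsoClass R :=
  Multiset.sumAddMonoidHom.comp (Multiset.mapAddMonoidHom Subtype.val)

theorem sumIndec_singleton (x : IndecClass R) : sumIndec R {x} = x.1 :=
  Multiset.sum_singleton x.1

theorem sumIndec_cons (x : IndecClass R) (s : Multiset (IndecClass R)) :
    sumIndec R (x ::ₘ s) = x.1 + sumIndec R s := by
  rw [← Multiset.singleton_add, map_add, sumIndec_singleton]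

section KrullSchmidt

variable [IsArtinianRing Rᵐᵒᵖ]

theorem exists_sumIndec_eq (M : FGMod R) : ∃ s, sumIndec R s = M.isoClass := by
  generalize hn : Module.length Rᵐᵒᵖ M = n
  induction n using WellFoundedLT.induction generalizing M with
  | ind n ih =>
  subst hn
  rcases subsingleton_or_nontrivial M with hM | hM
  · exact ⟨0, (map_zero _).trans (isoClass_eq_zero_iff.2 hM).symm⟩
  by_cases hM' : M.Indec
  · exact ⟨{⟨_, M, hM', rfl⟩}, sumIndec_singleton _⟩
  obtain ⟨U, V, hUV, hU, hV⟩ :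
      ∃ U V : Submodule Rᵐᵒᵖ M, IsCompl U V ∧ U ≠ ⊥ ∧ V ≠ ⊥ := by
    simpa [FGMod.Indec, hM] using hM'
  obtain ⟨s, hs⟩ := ih _ (Submodule.length_lt fun h => hV (eq_bot_of_top_isCompl (h ▸ hUV))) ⟨U⟩ rfl
  obtain ⟨t, ht⟩ := ih _ (Submodule.length_lt fun h => hU (eq_bot_of_isCompl_top (h ▸ hUV))) ⟨V⟩ rfl
  refine ⟨s + t, ?_⟩
  rw [map_add, hs, ht]
  exact isoClass_eq_iff.2 ⟨U.prodEquivOfIsCompl V hUV⟩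

theorem Indec.isLocalRing_end (hX : X.Indec) : IsLocalRing (End Rᵐᵒᵖ X) :=
  have := hX.1
  isLocalRing_end_of_forall_isCompl hX.2

theorem Indec.isoClass_mem_of_isSummand (hX : X.Indec) {s : Multiset (IndecClass R)}
    (hM : sumIndec R s = M.isoClass) (h : X.IsSummand M) : ⟨X.isoClass, X, hX, rfl⟩ ∈ s := by
  have := hX.1
  have := hX.isLocalRing_end
  rw [isSummand_iff_isRetract] at h
  induction s using Multiset.induction generalizing M with
  | empty =>
    obtain ⟨i, r, hri⟩ := h
    have hi : Injective i := LeftInverse.injective (LinearMap.congr_fun hri)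
    have := isoClass_eq_zero_iff.1 (hM.symm.trans (map_zero _))
    exact (not_subsingleton X hi.subsingleton).elim
  | cons y s ih =>
    obtain ⟨_, Y, hY, rfl⟩ := y
    obtain ⟨N, hN⟩ := isoClass_surjective (sumIndec R s)
    rw [sumIndec_cons, ← hN] at hM
    obtain ⟨e : M ≃ₗ[Rᵐᵒᵖ] Y × N⟩ := isoClass_eq_iff.1 hM.symm
    obtain ⟨i, r, hri⟩ := h
    have hYN : IsRetract Rᵐᵒᵖ X (Y × N) :=
      ⟨e.toLinearMap ∘ₗ i, r ∘ₗ e.symm.toLinearMap, by ext; simp [← hri]⟩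
    rcases hYN.left_or_right_of_prod with hXY | hXN
    · exact Multiset.mem_cons.2 (.inl (Subtype.ext (isoClass_eq_iff.2 (hXY.nonempty_equiv hY.2))))
    · exact Multiset.mem_cons_of_mem (ih hN.symm hXN)

theorem sumIndec_injective : Injective (sumIndec R) := by
  intro s t hst
  induction s using Multiset.induction generalizing t with
  | empty =>
    refine (Multiset.eq_zero_of_forall_notMem ?_).symm
    rintro ⟨_, X, hX, rfl⟩ hXt
    obtain ⟨t, rfl⟩ := Multiset.exists_cons_of_mem hXt
    have hXZ : X.IsSummand (FGMod.zero R) :=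
      isSummand_iff_exists_isoClass_eq_add.2 ⟨_, hst.trans (sumIndec_cons _ _)⟩
    exact Multiset.notMem_zero _ (hX.isoClass_mem_of_isSummand (map_zero _) hXZ)
  | cons x s ih =>
    obtain ⟨_, X, hX, rfl⟩ := x
    obtain ⟨M, hM⟩ := isoClass_surjective (sumIndec R t)
    have hXM : X.IsSummand M :=
      isSummand_iff_exists_isoClass_eq_add.2 ⟨_, hM.trans (hst.symm.trans (sumIndec_cons _ _))⟩
    obtain ⟨t, rfl⟩ := Multiset.exists_cons_of_mem (hX.isoClass_mem_of_isSummand hM.symm hXM)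
    obtain ⟨N, hN⟩ := isoClass_surjective (sumIndec R s)
    obtain ⟨N', hN'⟩ := isoClass_surjective (sumIndec R t)
    have := hX.isLocalRing_end
    rw [sumIndec_cons, sumIndec_cons, ← hN, ← hN'] at hst
    obtain ⟨e : (X × N) ≃ₗ[Rᵐᵒᵖ] X × N'⟩ := isoClass_eq_iff.1 hst
    have hNN' : N.isoClass = N'.isoClass := isoClass_eq_iff.2 (nonempty_equiv_of_prod_equiv_prod e)
    rw [ih (hN.symm.trans (hNN'.trans hN'))]

variable (R) in
/-- Krull–Schmidt: the isomorphism classes form the free commutative monoid on the indecomposable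
ones. -/
noncomputable def indecFactors : IsoClass R ≃+ Multiset (IndecClass R) :=
  (AddEquiv.ofBijective (sumIndec R) ⟨sumIndec_injective, IsoClass.ind exists_sumIndec_eq⟩).symm

end KrullSchmidt

end DirectSum

section StableFactors

variable {R} {M N P X Y : FGMod R}

theorem isSummand_left (hM : M.isoClass = X.isoClass + Y.isoClass) : X.IsSummand M :=
  isSummand_iff_exists_isoClass_eq_add.2 ⟨_, hM⟩

theorem isSummand_right (hM : M.isoClass = X.isoClass + Y.isoClass) : Y.IsSummand M :=
  isSummand_left (hM.trans (add_comm _ _))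

theorem IsSummand.trans (hX : X.IsSummand M) (hM : M.IsSummand N) : X.IsSummand N := by
  rw [isSummand_iff_exists_isoClass_eq_add] at *
  obtain ⟨c, hc⟩ := hX
  obtain ⟨d, hd⟩ := hM
  exact ⟨c + d, by rw [hd, hc, add_assoc]⟩

theorem Proj.of_isSummand (hM : M.Proj) (hX : X.IsSummand M) : X.Proj :=
  hM.of_isRetract (isSummand_iff_isRetract.1 hX)

variable (R) in
/-- The isomorphism classes of projective modules. -/
def projClass : AddSubmonoid (IsoClass R) where
  carrier := {x | ∃ P : FGMod R, P.Proj ∧ P.isoClass = x}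
  zero_mem' := ⟨_, Proj.zero, isoClass_zero⟩
  add_mem' := by
    rintro _ _ ⟨P, hP, rfl⟩ ⟨Q, hQ, rfl⟩
    exact ⟨_, hP.prod hQ, isoClass_prod P Q⟩

theorem isoClass_mem_projClass_iff : M.isoClass ∈ projClass R ↔ M.Proj := by
  refine ⟨?_, fun hM => ⟨M, hM, rfl⟩⟩
  rintro ⟨P, hP, hPM⟩
  exact hP.of_isRetract (isoClass_eq_iff.1 hPM.symm).isRetract

variable [IsArtinianRing Rᵐᵒᵖ]

open Classical in
variable (R) in
/-- The multiset of nonprojective indecomposable direct factors: the part of a module that the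
Igusa–Todorov group sees. -/
noncomputable def stableFactors : IsoClass R →+ Multiset (IndecClass R) where
  toFun x := (indecFactors R x).filter (·.1 ∉ projClass R)
  map_zero' := by rw [map_zero, Multiset.filter_zero]
  map_add' x y := by rw [map_add, Multiset.filter_add]

theorem sumIndec_indecFactors (x : IsoClass R) : sumIndec R (indecFactors R x) = x :=
  (indecFactors R).symm_apply_apply x

theorem exists_proj_isoClass_eq (M : FGMod R) :
    ∃ P : FGMod R, P.Proj ∧ M.isoClass = sumIndec R (stableFactors R M.isoClass) + P.isoClass := by
  classical
  obtain ⟨P, hP, hPM⟩ : sumIndec R ((indecFactors R M.isoClass).filter (¬ ·.1 ∉ projClass R))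
      ∈ projClass R := by
    refine AddSubmonoid.multiset_sum_mem _ _ fun x hx => ?_
    obtain ⟨y, hy, rfl⟩ := Multiset.mem_map.1 hx
    exact not_not.1 (Multiset.mem_filter.1 hy).2
  refine ⟨P, hP, ?_⟩
  rw [hPM, ← map_add]
  exact (sumIndec_indecFactors _).symm.trans (congrArg _ (Multiset.filter_add_not _ _).symm)

theorem exists_indec_of_mem_stableFactors {x : IndecClass R}
    (hx : x ∈ stableFactors R M.isoClass) :
    ∃ X : FGMod R, X.Indec ∧ ¬ X.Proj ∧ X.IsSummand M ∧ X.isoClass = x.1 := by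
  classical
  obtain ⟨X, hX, hXx⟩ := x.2
  obtain ⟨hxM, hxP⟩ := Multiset.mem_filter.1 hx
  obtain ⟨s, hs⟩ := Multiset.exists_cons_of_mem hxM
  refine ⟨X, hX, fun hP => hxP (hXx ▸ isoClass_mem_projClass_iff.2 hP),
    isSummand_iff_exists_isoClass_eq_add.2 ⟨sumIndec R s, ?_⟩, hXx⟩
  rw [← sumIndec_indecFactors M.isoClass, hs, sumIndec_cons, hXx]

theorem stableFactors_eq_zero_iff : stableFactors R M.isoClass = 0 ↔ M.Proj := by
  constructor
  · intro h
    obtain ⟨P, hP, hPM⟩ := exists_proj_isoClass_eq M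
    rw [h, map_zero, zero_add] at hPM
    exact hP.of_isRetract (isoClass_eq_iff.1 hPM).isRetract
  · intro hM
    refine Multiset.eq_zero_of_forall_notMem fun x hx => ?_
    obtain ⟨X, -, hXP, hXM, -⟩ := exists_indec_of_mem_stableFactors hx
    exact hXP (hM.of_isSummand hXM)

theorem stableFactors_le_of_isSummand (h : X.IsSummand M) :
    stableFactors R X.isoClass ≤ stableFactors R M.isoClass := by
  obtain ⟨c, hc⟩ := isSummand_iff_exists_isoClass_eq_add.1 h
  rw [hc, map_add]
  exact Multiset.le_add_right _ _

theorem isSummand_of_le_stableFactors {s : Multiset (IndecClass R)} (hX : X.isoClass = sumIndec R s)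
    (hs : s ≤ stableFactors R M.isoClass) : X.IsSummand M := by
  obtain ⟨t, ht⟩ := Multiset.le_iff_exists_add.1 hs
  obtain ⟨P, -, hP⟩ := exists_proj_isoClass_eq M
  exact isSummand_iff_exists_isoClass_eq_add.2
    ⟨sumIndec R t + P.isoClass, by rw [hP, ht, map_add, hX, add_assoc]⟩

end StableFactors

section ShortExact

variable {R} {A B C M N P Q W X Y Z : FGMod R}

/-- There is a short exact sequence `0 → A → B → C → 0`. -/
def IsShortExact (A B C : FGMod R) : Prop :=
  ∃ (f : A →ₗ[Rᵐᵒᵖ] B) (g : B →ₗ[Rᵐᵒᵖ] C), Injective f ∧ Surjective g ∧ Exact f g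

theorem IsShortExact.of_iso (h : IsShortExact A B C) : A.Iso X → B.Iso Y → IsShortExact X Y C := by
  rintro ⟨e⟩ ⟨e'⟩
  obtain ⟨f, g, hf, hg, hfg⟩ := h
  refine ⟨e'.toLinearMap ∘ₗ f ∘ₗ e.symm.toLinearMap, g ∘ₗ e'.symm.toLinearMap,
    e'.injective.comp (hf.comp e.symm.injective), hg.comp e'.symm.surjective, fun y => ?_⟩
  simp [hfg (e'.symm y), e.symm.surjective.exists, LinearEquiv.eq_symm_apply]

theorem IsShortExact.isoClass_eq_add (h : IsShortExact A B C) (hC : C.Proj) :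
    B.isoClass = A.isoClass + C.isoClass := by
  have : Projective Rᵐᵒᵖ C := hC
  obtain ⟨f, g, hf, hg, hfg⟩ := h
  exact isoClass_eq_iff.2 (nonempty_equiv_prod_of_exact hfg hf hg)

theorem exists_proj_surjective (M : FGMod R) :
    ∃ (P : FGMod R) (f : P →ₗ[Rᵐᵒᵖ] M), P.Proj ∧ Surjective f := by
  obtain ⟨n, f, hf⟩ := Module.Finite.exists_fin' Rᵐᵒᵖ M
  let e : (Fin n → ULift.{u} Rᵐᵒᵖ) ≃ₗ[Rᵐᵒᵖ] (Fin n → Rᵐᵒᵖ) :=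
    .piCongrRight fun _ => ULift.moduleEquiv
  have := Module.Finite.equiv e.symm
  exact ⟨⟨Fin n → ULift.{u} Rᵐᵒᵖ⟩, f ∘ₗ e.toLinearMap, .of_equiv e.symm, hf.comp e.surjective⟩

variable [IsArtinianRing Rᵐᵒᵖ]

/-- The kernel of a homomorphism, as a finitely generated module. -/
def ker (f : M →ₗ[Rᵐᵒᵖ] N) : FGMod R := ⟨LinearMap.ker f⟩

theorem isShortExact_ker {f : M →ₗ[Rᵐᵒᵖ] N} (hf : Surjective f) : IsShortExact (ker f) M N :=
  ⟨(LinearMap.ker f).subtype, f, Subtype.val_injective, hf, f.exact_subtype_ker_map⟩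

theorem iso_ker_of_exact {f : N →ₗ[Rᵐᵒᵖ] P} {g : P →ₗ[Rᵐᵒᵖ] M} (hf : Injective f)
    (hfg : Exact f g) : N.Iso (ker g) :=
  ⟨.ofInjective f hf ≪≫ₗ .ofEq _ _ hfg.linearMap_ker_eq.symm⟩

theorem IsShortExact.stableFactors_eq {M' P' : FGMod R} (h : IsShortExact M P N) (hP : P.Proj)
    (h' : IsShortExact M' P' N) (hP' : P'.Proj) :
    stableFactors R M.isoClass = stableFactors R M'.isoClass := by
  have : Projective Rᵐᵒᵖ P := hP
  have : Projective Rᵐᵒᵖ P' := hP'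
  obtain ⟨i, p, hi, hp, hip⟩ := h
  obtain ⟨i', p', hi', hp', hip'⟩ := h'
  have hker : (ker p).isoClass + P'.isoClass = (ker p').isoClass + P.isoClass :=
    isoClass_eq_iff.2 (nonempty_ker_prod_equiv_ker_prod hp hp')
  have := congrArg (stableFactors R) hker
  rwa [map_add, map_add, stableFactors_eq_zero_iff.2 hP, stableFactors_eq_zero_iff.2 hP', add_zero,
    add_zero, ← isoClass_eq_iff.2 (iso_ker_of_exact hi hip),
    ← isoClass_eq_iff.2 (iso_ker_of_exact hi' hip')] at this

theorem IsShortExact.exists_horseshoe (h : IsShortExact A B C) :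
    ∃ X Y Z P Q T : FGMod R, IsShortExact X Y Z ∧ P.Proj ∧ Q.Proj ∧ T.Proj ∧
      IsShortExact X P A ∧ IsShortExact Y Q B ∧ IsShortExact Z T C := by
  obtain ⟨f, g, hf, hg, hfg⟩ := h
  obtain ⟨P, p, hP, hp⟩ := exists_proj_surjective A
  obtain ⟨T, q, hT, hq⟩ := exists_proj_surjective C
  have : Projective Rᵐᵒᵖ T := hT
  obtain ⟨h, i, r, hh, hi, hr, hir⟩ := exists_exact_ker_of_exact hf hg hfg hp hq
  exact ⟨ker p, ker (M := P.prod T) h, ker q, P, P.prod T, T, ⟨i, r, hi, hr, hir⟩, hP, hP.prod hT,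
    hT, isShortExact_ker hp, isShortExact_ker hh, isShortExact_ker hq⟩

end ShortExact

section Syzygy

variable {R} {M N P : FGMod R} [IsArtinianRing Rᵐᵒᵖ]

theorem exists_isProjCover (M : FGMod R) :
    ∃ (P : FGMod R) (f : P →ₗ[Rᵐᵒᵖ] M), IsProjCover M P f := by
  let lengths : Set ℕ∞ := {n | ∃ (P : FGMod R) (f : P →ₗ[Rᵐᵒᵖ] M), P.Proj ∧ Surjective f ∧
    Module.length Rᵐᵒᵖ P = n}
  have hne : lengths.Nonempty := by
    obtain ⟨P, f, hP, hf⟩ := exists_proj_surjective M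
    exact ⟨_, P, f, hP, hf, rfl⟩
  obtain ⟨P, f, hP, hf, hlength⟩ := wellFounded_lt.min_mem lengths hne
  refine ⟨P, f, hP, hf, fun N hN => ?_⟩
  have : Projective Rᵐᵒᵖ P := hP
  obtain ⟨V, hVN, hV, hfV⟩ := exists_projective_le_surjective hf hN
  by_contra hN'
  have hlt := Submodule.length_lt (N := V) fun h => hN' (top_le_iff.1 (h ▸ hVN))
  rw [hlength] at hlt
  exact wellFounded_lt.not_lt_min lengths ⟨⟨V⟩, f ∘ₗ V.subtype, hV, hfV, rfl⟩ hlt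

theorem exists_isSyzygy (M : FGMod R) : ∃ N, IsSyzygy M N := by
  obtain ⟨P, f, h⟩ := exists_isProjCover M
  exact ⟨ker f, P, f, h, ⟨.refl _ _⟩⟩

theorem exists_isSyzygyN : ∀ (n : ℕ) (M : FGMod R), ∃ N, IsSyzygyN n M N
  | 0, M => ⟨M, .refl M⟩
  | n + 1, M => by
    obtain ⟨L, hL⟩ := exists_isSyzygy M
    obtain ⟨N, hN⟩ := exists_isSyzygyN n L
    exact ⟨N, L, hL, hN⟩

theorem exists_isShortExact_of_isSyzygy (h : IsSyzygy M N) :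
    ∃ P : FGMod R, P.Proj ∧ IsShortExact N P M := by
  obtain ⟨P, f, ⟨hP, hf, -⟩, ⟨e⟩⟩ := h
  exact ⟨P, hP, (isShortExact_ker hf).of_iso ⟨e.symm⟩ (.refl P)⟩

end Syzygy

section ProjectiveDimension

open CategoryTheory

variable {R} {M N P W X Y Z : FGMod R} {m n : ℕ}

theorem IsShortExact.hasProjectiveDimensionLT_add_two_iff (h : IsShortExact N P M) (hP : P.Proj) :
    HasProjectiveDimensionLT (ModuleCat.of Rᵐᵒᵖ M) (n + 2) ↔
      HasProjectiveDimensionLT (ModuleCat.of Rᵐᵒᵖ N) (n + 1) := by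
  obtain ⟨f, g, hf, hg, hfg⟩ := h
  exact (shortExact_moduleCat_of_exact hf hg hfg).hasProjectiveDimensionLT_X₃_iff n
    (projective_iff_hasProjectiveDimensionLT_one.2 (hasProjectiveDimensionLT_one_iff.2 hP))

theorem pdIT_le (h : HasPdLE n M) : pdIT M ≤ n := Nat.sInf_le h

theorem hasPdLE_pdIT (h : FinPd M) : HasPdLE (pdIT M) M := Nat.sInf_mem h

variable [IsArtinianRing Rᵐᵒᵖ]

theorem hasPdLE_iff :
    HasPdLE n M ↔ HasProjectiveDimensionLT (ModuleCat.of Rᵐᵒᵖ M) (n + 1) := by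
  induction n generalizing M with
  | zero => exact hasProjectiveDimensionLT_one_iff.symm
  | succ n ih =>
    constructor
    · rintro (h | ⟨N, hN, h⟩)
      · have := hasProjectiveDimensionLT_one_iff.2 h
        exact hasProjectiveDimensionLT_of_ge _ 1 _ (by omega)
      · obtain ⟨P, hP, hNPM⟩ := exists_isShortExact_of_isSyzygy hN
        exact (hNPM.hasProjectiveDimensionLT_add_two_iff hP).2 (ih.1 h)
    · intro h
      obtain ⟨N, hN⟩ := exists_isSyzygy M
      obtain ⟨P, hP, hNPM⟩ := exists_isShortExact_of_isSyzygy hN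
      exact .inr ⟨N, hN, ih.2 ((hNPM.hasProjectiveDimensionLT_add_two_iff hP).1 h)⟩

theorem IsShortExact.hasPdLE_succ_iff (h : IsShortExact N P M) (hP : P.Proj) :
    HasPdLE (n + 1) M ↔ HasPdLE n N := by
  rw [hasPdLE_iff, hasPdLE_iff, h.hasProjectiveDimensionLT_add_two_iff hP]

theorem hasPdLE_mono (h : m ≤ n) (hM : HasPdLE m M) : HasPdLE n M := by
  rw [hasPdLE_iff] at *
  exact hasProjectiveDimensionLT_of_ge _ (m + 1) _ (by omega)

theorem hasPdLE_of_isSummand (h : X.IsSummand M) (hM : HasPdLE n M) : HasPdLE n X := by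
  obtain ⟨i, r, hri⟩ := isSummand_iff_isRetract.1 h
  rw [hasPdLE_iff] at *
  let retract : Retract (ModuleCat.of Rᵐᵒᵖ X) (ModuleCat.of Rᵐᵒᵖ M) :=
    { i := ModuleCat.ofHom i
      r := ModuleCat.ofHom r
      retract := by rw [← ModuleCat.ofHom_comp, hri]; rfl }
  exact retract.hasProjectiveDimensionLT _

theorem hasPdLE_prod (hM : HasPdLE n M) (hN : HasPdLE n N) : HasPdLE n (M.prod N) := by
  rw [hasPdLE_iff] at *
  exact (shortExact_moduleCat_of_exact LinearMap.inl_injective LinearMap.snd_surjective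
    .inl_snd).hasProjectiveDimensionLT_X₂ _ hM hN

theorem hasPdLE_of_stableFactors_le
    (h : stableFactors R X.isoClass ≤ stableFactors R M.isoClass) (hM : HasPdLE n M) :
    HasPdLE n X := by
  obtain ⟨W, hW⟩ := isoClass_surjective (sumIndec R (stableFactors R X.isoClass))
  obtain ⟨P, hP, hWP⟩ := exists_proj_isoClass_eq X
  have hWM : HasPdLE n W := hasPdLE_of_isSummand (isSummand_of_le_stableFactors hW h) hM
  rw [← hW, ← isoClass_prod, isoClass_eq_iff] at hWP
  exact hasPdLE_of_isSummand (isSummand_iff_isRetract.2 hWP.isRetract)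
    (hasPdLE_prod hWM (hasPdLE_mono (Nat.zero_le n) hP))

theorem hasPdLE_of_isSyzygyN (h : IsSyzygyN m M N) (hM : HasPdLE (m + n) M) : HasPdLE n N := by
  induction m generalizing M with
  | zero =>
    rw [zero_add] at hM
    exact hasPdLE_of_isSummand (isSummand_iff_isRetract.2 (Iso.isRetract (Iso.symm h))) hM
  | succ m ih =>
    obtain ⟨L, hL, hLN⟩ := h
    obtain ⟨P, hP, hLPM⟩ := exists_isShortExact_of_isSyzygy hL
    exact ih hLN ((hLPM.hasPdLE_succ_iff hP).1 (by rwa [add_right_comm] at hM))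

theorem pdIT_eq_of_stableFactors_eq
    (h : stableFactors R M.isoClass = stableFactors R N.isoClass) : pdIT M = pdIT N :=
  congrArg sInf (Set.ext fun _ =>
    ⟨hasPdLE_of_stableFactors_le h.ge, hasPdLE_of_stableFactors_le h.le⟩)

theorem IsShortExact.exists_isSummand_finPd (h : IsShortExact X Y Z)
    (hXY : stableFactors R X.isoClass = stableFactors R Y.isoClass) (hZ : FinPd Z) :
    ∃ U : FGMod R, FinPd U ∧ (∀ n, HasPdLE n U → HasPdLE (n + 1) Z) ∧
      ∀ M : FGMod R, stableFactors R X.isoClass ≤ stableFactors R M.isoClass → U.IsSummand M := by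
  obtain ⟨W, hW⟩ := isoClass_surjective (sumIndec R (stableFactors R X.isoClass))
  obtain ⟨P, hP, hWP⟩ := exists_proj_isoClass_eq X
  obtain ⟨Q, hQ, hWQ⟩ := exists_proj_isoClass_eq Y
  rw [← hW] at hWP
  rw [← hXY, ← hW] at hWQ
  have : Projective Rᵐᵒᵖ P := hP
  have : Projective Rᵐᵒᵖ Q := hQ
  obtain ⟨d, hd⟩ := hZ
  have := hasPdLE_iff.1 hd
  obtain ⟨f, g, hf, hg, hfg⟩ := h.of_iso (isoClass_eq_iff.1 hWP) (isoClass_eq_iff.1 hWQ)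
  obtain ⟨U, V, hUV, hU, hUZ⟩ :=
    exists_isCompl_hasProjectiveDimensionLT hf hg hfg (Nat.le_add_left 1 d)
  have hUW : (FGMod.mk U).IsSummand W := ⟨U, V, hUV, ⟨.refl _ _⟩⟩
  exact ⟨⟨U⟩, ⟨d, hasPdLE_iff.2 hU⟩,
    fun n hn => hasPdLE_iff.2 (hUZ (n + 1) (Nat.le_add_left 1 n) (hasPdLE_iff.1 hn)),
    fun M hM => hUW.trans (isSummand_of_le_stableFactors hW hM)⟩

end ProjectiveDimension

section GroupK

variable {R} {A B M N P X : FGMod R}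

theorem ITcls_eq_add (h : M.isoClass = A.isoClass + B.isoClass) :
    ITcls R M = ITcls R A + ITcls R B := by
  obtain ⟨e⟩ := isoClass_eq_iff.1 h
  rw [← sub_eq_zero, ← sub_sub]
  exact (QuotientAddGroup.eq_zero_iff _).2
    (AddSubgroup.subset_closure (.inl ⟨M, A, B, ⟨e⟩, rfl⟩))

theorem ITcls_eq_zero_of_proj (hP : P.Proj) : ITcls R P = 0 :=
  (QuotientAddGroup.eq_zero_iff _).2 (AddSubgroup.subset_closure (.inr ⟨P, hP, rfl⟩))

theorem ITcls_eq_of_isoClass_eq (h : M.isoClass = N.isoClass) : ITcls R M = ITcls R N := by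
  rw [ITcls_eq_add (h.trans (add_zero _).symm), ITcls_eq_zero_of_proj Proj.zero, add_zero]

variable (R) in
/-- The homomorphism to the Igusa–Todorov group induced by `M ↦ [M]`. -/
noncomputable def IsoClass.toITK : IsoClass R →+ ITK R where
  toFun := Quotient.lift (ITcls R) fun _ _ h => ITcls_eq_of_isoClass_eq (isoClass_eq_iff.2 h)
  map_zero' := ITcls_eq_zero_of_proj Proj.zero
  map_add' := IsoClass.ind fun M => IsoClass.ind fun N => ITcls_eq_add (isoClass_prod M N)

theorem toITK_isoClass (M : FGMod R) : IsoClass.toITK R M.isoClass = ITcls R M := rfl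

theorem exists_eq_ITcls_sub (x : ITK R) : ∃ M N : FGMod R, x = ITcls R M - ITcls R N := by
  obtain ⟨x, rfl⟩ := QuotientAddGroup.mk_surjective x
  induction x using FreeAbelianGroup.induction_on with
  | zero => exact ⟨.zero R, .zero R, (sub_self _).symm⟩
  | of M =>
    exact ⟨M, .zero R, by rw [ITcls_eq_zero_of_proj Proj.zero, sub_zero]; rfl⟩
  | neg M _ => exact ⟨.zero R, M, by rw [ITcls_eq_zero_of_proj Proj.zero, zero_sub]; rfl⟩
  | add x y hx hy =>
    obtain ⟨M, N, hMN⟩ := hx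
    obtain ⟨M', N', hMN'⟩ := hy
    refine ⟨M.prod M', N.prod N', ?_⟩
    rw [ITcls_eq_add (isoClass_prod M M'), ITcls_eq_add (isoClass_prod N N'), add_sub_add_comm,
      ← hMN, ← hMN']
    rfl

variable [IsArtinianRing Rᵐᵒᵖ]

theorem ITcls_eq_toITK_stableFactors (M : FGMod R) :
    ITcls R M = IsoClass.toITK R (sumIndec R (stableFactors R M.isoClass)) := by
  obtain ⟨P, hP, hMP⟩ := exists_proj_isoClass_eq M
  conv_lhs =>
    rw [← toITK_isoClass, hMP, map_add, toITK_isoClass, ITcls_eq_zero_of_proj hP, add_zero]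

open Classical in
variable (R) in
/-- The multiplicities of the nonprojective indecomposables, as coordinates on the Igusa–Todorov
group. -/
noncomputable def multiplicity : ITK R →+ IndecClass R → ℤ :=
  QuotientAddGroup.lift _
    (FreeAbelianGroup.lift fun M x => ((stableFactors R M.isoClass).count x : ℤ)) <| by
    rw [AddSubgroup.closure_le]
    rintro _ (⟨A, B, C, e, rfl⟩ | ⟨P, hP, rfl⟩)
    · have hABC : A.isoClass = B.isoClass + C.isoClass := isoClass_eq_iff.2 e
      ext x
      simp [hABC]
    · ext x
      simp [stableFactors_eq_zero_iff.2 hP]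

open Classical in
theorem multiplicity_ITcls (M : FGMod R) (x : IndecClass R) :
    multiplicity R (ITcls R M) x = (stableFactors R M.isoClass).count x :=
  congrFun (FreeAbelianGroup.lift_apply_of _ M) x

theorem ITcls_eq_iff :
    ITcls R M = ITcls R N ↔ stableFactors R M.isoClass = stableFactors R N.isoClass := by
  classical
  constructor
  · intro h
    ext x
    have := congrFun (congrArg (multiplicity R) h) x
    rwa [multiplicity_ITcls, multiplicity_ITcls, Nat.cast_inj] at this
  · intro h
    rw [ITcls_eq_toITK_stableFactors, h, ← ITcls_eq_toITK_stableFactors]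

theorem stableFactors_le_of_ITcls_eq_add (h : ITcls R M = ITcls R A + ITcls R B) :
    stableFactors R A.isoClass ≤ stableFactors R M.isoClass := by
  rw [← ITcls_eq_add (isoClass_prod A B), ITcls_eq_iff, isoClass_prod, map_add] at h
  exact h ▸ Multiset.le_add_right _ _

theorem multiplicity_injective : Injective (multiplicity R) := by
  classical
  rw [injective_iff_map_eq_zero]
  intro x hx
  obtain ⟨M, N, rfl⟩ := exists_eq_ITcls_sub x
  rw [map_sub, sub_eq_zero] at hx
  refine sub_eq_zero.2 (ITcls_eq_iff.2 (Multiset.ext.2 fun x => ?_))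
  have := congrFun hx x
  rwa [multiplicity_ITcls, multiplicity_ITcls, Nat.cast_inj] at this

instance : IsTorsionFree ℤ (ITK R) :=
  multiplicity_injective.moduleIsTorsionFree _ fun n x => map_zsmul _ n x

theorem ITcls_mem_ITgen_of_isSummand (h : X.IsSummand M) : ITcls R X ∈ ITgen R M := by
  rw [ITcls_eq_toITK_stableFactors, sumIndec, AddMonoidHom.comp_apply,
    Multiset.coe_sumAddMonoidHom, AddMonoidHom.map_multiset_sum]
  refine AddSubgroup.multiset_sum_mem _ _ fun _ hx => ?_
  simp only [Multiset.coe_mapAddMonoidHom, Multiset.mem_map, exists_exists_and_eq_and] at hx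
  obtain ⟨x, hx, rfl⟩ := hx
  obtain ⟨N, hN, hNP, hNX, hNx⟩ := exists_indec_of_mem_stableFactors hx
  exact AddSubgroup.subset_closure ⟨N, hNX.trans h, hN, hNP, congrArg (IsoClass.toITK R) hNx.symm⟩

theorem mem_stableFactors_of_isSummand (h : X.IsSummand M) (hX : X.Indec) (hXP : ¬ X.Proj) :
    ⟨X.isoClass, X, hX, rfl⟩ ∈ stableFactors R M.isoClass := by
  classical
  exact Multiset.mem_filter.2 ⟨hX.isoClass_mem_of_isSummand (sumIndec_indecFactors _) h,
    isoClass_mem_projClass_iff.not.2 hXP⟩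

instance (M : FGMod R) : Module.Finite ℤ (AddSubgroup.toIntSubmodule (ITgen R M)) := by
  classical
  have hfinite :
      {x | ∃ N : FGMod R, N.IsSummand M ∧ N.Indec ∧ ¬ N.Proj ∧ x = ITcls R N}.Finite := by
    refine ((stableFactors R M.isoClass).toFinset.finite_toSet.image
      fun x => IsoClass.toITK R x.1).subset ?_
    rintro _ ⟨N, hNM, hN, hNP, rfl⟩
    exact ⟨_, Multiset.mem_toFinset.2 (mem_stableFactors_of_isSummand hNM hN hNP), rfl⟩
  rw [Module.Finite.iff_fg, Submodule.fg_iff_addSubgroup_fg]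
  exact (AddSubgroup.fg_iff _).2 ⟨_, rfl, hfinite⟩

end GroupK

end FGMod

namespace IsSyzygyEnd

open FGMod IgusaTodorov

variable {R} {A B C M N P X : FGMod R} {OmK : AddMonoid.End (ITK R)} {m n : ℕ}

theorem pow_apply_ITcls (hOm : IsSyzygyEnd R OmK) (h : IsSyzygyN n M N) :
    (OmK ^ n) (ITcls R M) = ITcls R N := by
  induction n generalizing M with
  | zero => exact ITcls_eq_of_isoClass_eq (isoClass_eq_iff.2 h)
  | succ n ih =>
    obtain ⟨L, hL, hLN⟩ := h
    rw [pow_succ, AddMonoid.End.coe_mul, comp_apply, hOm M L hL, ih hLN]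

variable [IsArtinianRing Rᵐᵒᵖ]

theorem apply_ITcls (hOm : IsSyzygyEnd R OmK) (h : IsShortExact N P M) (hP : P.Proj) :
    OmK (ITcls R M) = ITcls R N := by
  obtain ⟨L, hL⟩ := exists_isSyzygy M
  obtain ⟨Q, hQ, hLQM⟩ := exists_isShortExact_of_isSyzygy hL
  rw [hOm M L hL]
  exact ITcls_eq_iff.2 (hLQM.stableFactors_eq hQ h hP)

theorem pow_apply_ITcls_eq_zero (hOm : IsSyzygyEnd R OmK) (hM : HasPdLE n M) :
    (OmK ^ n) (ITcls R M) = 0 := by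
  obtain ⟨N, hN⟩ := exists_isSyzygyN n M
  rw [hOm.pow_apply_ITcls hN]
  exact ITcls_eq_zero_of_proj (hasPdLE_of_isSyzygyN (n := 0) hN hM)

theorem exists_isShortExact (hOm : IsSyzygyEnd R OmK) (h : IsShortExact A B C) (n : ℕ) :
    ∃ X Y Z : FGMod R, IsShortExact X Y Z ∧ (OmK ^ n) (ITcls R A) = ITcls R X ∧
      (OmK ^ n) (ITcls R B) = ITcls R Y ∧ ∀ k, HasPdLE (k + n) C ↔ HasPdLE k Z := by
  induction n generalizing A B C with
  | zero => exact ⟨A, B, C, h, rfl, rfl, fun _ => .rfl⟩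
  | succ n ih =>
    obtain ⟨X, Y, Z, P, Q, T, hXYZ, hP, hQ, hT, hXA, hYB, hZC⟩ := h.exists_horseshoe
    obtain ⟨X', Y', Z', hXYZ', hX', hY', hZ'⟩ := ih hXYZ
    refine ⟨X', Y', Z', hXYZ', ?_, ?_, fun k => ?_⟩
    · rw [pow_succ, AddMonoid.End.coe_mul, comp_apply, hOm.apply_ITcls hXA hP, hX']
    · rw [pow_succ, AddMonoid.End.coe_mul, comp_apply, hOm.apply_ITcls hYB hQ, hY']
    · rw [← hZ' k, ← add_assoc, hZC.hasPdLE_succ_iff hT]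

theorem pow_apply_ITcls_eq_of_isShortExact (hOm : IsSyzygyEnd R OmK) (h : IsShortExact A B C)
    (hC : HasPdLE n C) : (OmK ^ n) (ITcls R A) = (OmK ^ n) (ITcls R B) := by
  obtain ⟨X, Y, Z, hXYZ, hX, hY, hZ⟩ := hOm.exists_isShortExact h n
  have hZproj : Z.Proj := (hZ 0).1 (by rwa [zero_add])
  rw [hX, hY, ITcls_eq_add (hXYZ.isoClass_eq_add hZproj), ITcls_eq_zero_of_proj hZproj, add_zero]

end IsSyzygyEnd

section Phi

open FGMod IgusaTodorov

variable {R} {OmK : AddMonoid.End (ITK R)} {n : ℕ} {A B C M N X : FGMod R}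

theorem rkIT_map_pow (H : AddSubgroup (ITK R)) (n : ℕ) :
    rkIT R (H.map (OmK ^ n : AddMonoid.End (ITK R))) =
      finrank ℤ (H.toIntSubmodule.map (addMonoidEndRingEquivInt (ITK R) OmK ^ n)) := by
  rw [← map_pow]
  rfl

variable [IsArtinianRing Rᵐᵒᵖ]

theorem rkIT_map_pow_eq_of_phiIT_le (hn : phiIT R OmK M ≤ n) :
    rkIT R ((ITgen R M).map (OmK ^ n : AddMonoid.End (ITK R))) =
      rkIT R ((ITgen R M).map (OmK ^ phiIT R OmK M : AddMonoid.End (ITK R))) := by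
  obtain ⟨k, hk⟩ := exists_forall_finrank_map_pow_eq (addMonoidEndRingEquivInt (ITK R) OmK)
    (ITgen R M).toIntSubmodule
  simp only [← rkIT_map_pow] at hk
  have hphi : phiIT R OmK M ∈ {m | ∀ i, m ≤ i →
      rkIT R ((ITgen R M).map (OmK ^ i : AddMonoid.End (ITK R))) =
        rkIT R ((ITgen R M).map (OmK ^ m : AddMonoid.End (ITK R)))} := Nat.sInf_mem ⟨k, hk⟩
  exact hphi n hn

theorem pow_phiIT_apply_eq_zero {x : ITK R} (hx : x ∈ ITgen R M) (hn : phiIT R OmK M ≤ n)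
    (hx0 : (OmK ^ n) x = 0) : (OmK ^ phiIT R OmK M) x = 0 := by
  obtain ⟨k, hk⟩ := Nat.exists_eq_add_of_le hn
  have hrank := rkIT_map_pow_eq_of_phiIT_le hn
  rw [rkIT_map_pow, rkIT_map_pow, hk] at hrank
  have := pow_apply_eq_zero_of_finrank_map_pow_eq hrank hx
  rw [← map_pow, ← map_pow, ← hk] at this
  exact this hx0

theorem IsSyzygyEnd.phiIT_le (hOm : IsSyzygyEnd R OmK) (hM : HasPdLE n M) :
    phiIT R OmK M ≤ n := by
  have hbot (i : ℕ) (hi : n ≤ i) : (ITgen R M).map (OmK ^ i : AddMonoid.End (ITK R)) = ⊥ := by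
    refine (AddSubgroup.map_eq_bot_iff _).2 ((AddSubgroup.closure_le _).2 ?_)
    rintro _ ⟨N, hN, -, -, rfl⟩
    exact hOm.pow_apply_ITcls_eq_zero (hasPdLE_mono hi (hasPdLE_of_isSummand hN hM))
  exact Nat.sInf_le fun i hi => by rw [hbot i hi, hbot n le_rfl]

theorem IsSyzygyEnd.psiIT_le (hOm : IsSyzygyEnd R OmK) (hM : HasPdLE n M) :
    psiIT R OmK M ≤ n := by
  obtain ⟨k, hk⟩ := Nat.exists_eq_add_of_le (hOm.phiIT_le hM)
  rw [psiIT, hk]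
  refine Nat.add_le_add_left (csSup_le' ?_) _
  rintro _ ⟨N, X, hN, hX, -, rfl⟩
  exact pdIT_le (hasPdLE_of_isSummand hX (hasPdLE_of_isSyzygyN hN (hk ▸ hM)))

theorem finite_pdIT_of_stableFactors_le (s : Multiset (IndecClass R)) :
    {d | ∃ X : FGMod R, stableFactors R X.isoClass ≤ s ∧ d = pdIT X}.Finite := by
  classical
  let factors (X : FGMod R) := stableFactors R X.isoClass
  have hpd : pdIT.FactorsThrough factors := fun _ _ => pdIT_eq_of_stableFactors_eq
  refine ((Set.finite_Iic s).image (extend factors pdIT 0)).subset ?_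
  rintro _ ⟨X, hX, rfl⟩
  exact ⟨_, hX, hpd.extend_apply 0 X⟩

theorem IsSyzygyEnd.phiIT_add_pdIT_le_psiIT (hOm : IsSyzygyEnd R OmK)
    (hN : IsSyzygyN (phiIT R OmK M) M N) (hX : X.IsSummand N) (hXpd : FinPd X) :
    phiIT R OmK M + pdIT X ≤ psiIT R OmK M := by
  rw [psiIT]
  refine Nat.add_le_add_left ?_ _
  refine le_csSup ?_ ⟨N, X, hN, hX, hXpd, rfl⟩
  refine ((finite_pdIT_of_stableFactors_le (stableFactors R N.isoClass)).subset ?_).bddAbove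
  rintro _ ⟨N', X', hN', hX', -, rfl⟩
  have hNN' : stableFactors R N'.isoClass = stableFactors R N.isoClass :=
    ITcls_eq_iff.1 ((hOm.pow_apply_ITcls hN').symm.trans (hOm.pow_apply_ITcls hN))
  exact ⟨X', (stableFactors_le_of_isSummand hX').trans hNN'.le, rfl⟩

theorem IsSyzygyEnd.pow_phiIT_prod_apply_ITcls_eq (hOm : IsSyzygyEnd R OmK)
    (h : IsShortExact A B C) (hC : FinPd C) :
    (OmK ^ phiIT R OmK (A.prod B)) (ITcls R A) = (OmK ^ phiIT R OmK (A.prod B)) (ITcls R B) := by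
  obtain ⟨n, hn⟩ := hC
  have hAB : ITcls R A - ITcls R B ∈ ITgen R (A.prod B) :=
    sub_mem (ITcls_mem_ITgen_of_isSummand (isSummand_left (isoClass_prod A B)))
      (ITcls_mem_ITgen_of_isSummand (isSummand_right (isoClass_prod A B)))
  rw [← sub_eq_zero, ← map_sub]
  refine pow_phiIT_apply_eq_zero hAB (Nat.le_add_right _ n) ?_
  rw [map_sub, sub_eq_zero]
  exact hOm.pow_apply_ITcls_eq_of_isShortExact h (hasPdLE_mono (Nat.le_add_left n _) hn)

end Phi

/-- If `0 → A → B → C → 0` is a short exact sequence of f.g. right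
`R`-modules with `pd C` finite, then `ψ(C) ≤ ψ(A ⊕ B) + 1`. -/
theorem psi_le_of_shortExact (R : Type u) [Ring R] [IsArtinianRing Rᵐᵒᵖ]
    (OmK : AddMonoid.End (ITK R)) (hOm : IsSyzygyEnd R OmK)
    (A B C : FGMod R) (f : A →ₗ[Rᵐᵒᵖ] B) (g : B →ₗ[Rᵐᵒᵖ] C)
    (hf : Function.Injective f) (hg : Function.Surjective g)
    (hfg : LinearMap.range f = LinearMap.ker g) (hC : FinPd C) :
    psiIT R OmK C ≤ psiIT R OmK (A.prod B) + 1 := by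
  have h : FGMod.IsShortExact A B C := ⟨f, g, hf, hg, LinearMap.exact_iff.2 hfg.symm⟩
  have hAB := hOm.pow_phiIT_prod_apply_ITcls_eq h hC
  set m := phiIT R OmK (A.prod B)
  obtain ⟨X, Y, Z, hXYZ, hX, hY, hZ⟩ := hOm.exists_isShortExact h m
  rw [hX, hY, FGMod.ITcls_eq_iff] at hAB
  have hZfin : FinPd Z :=
    hC.imp fun n hn => (hZ n).1 (FGMod.hasPdLE_mono (Nat.le_add_right n m) hn)
  obtain ⟨U, hU, hUZ, hUsum⟩ := hXYZ.exists_isSummand_finPd hAB hZfin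
  obtain ⟨N, hN⟩ := FGMod.exists_isSyzygyN m (A.prod B)
  have hNXY : ITcls R N = ITcls R X + ITcls R Y := by
    rw [← hOm.pow_apply_ITcls hN, FGMod.ITcls_eq_add (FGMod.isoClass_prod A B), map_add, hX, hY]
  have hUN : U.IsSummand N := hUsum N (FGMod.stableFactors_le_of_ITcls_eq_add hNXY)
  calc psiIT R OmK C ≤ pdIT U + 1 + m :=
        hOm.psiIT_le ((hZ _).2 (hUZ _ (FGMod.hasPdLE_pdIT hU)))
    _ = m + pdIT U + 1 := by ring
    _ ≤ psiIT R OmK (A.prod B) + 1 :=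
        Nat.add_le_add_right (hOm.phiIT_add_pdIT_le_psiIT hN hUN hU) 1
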